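/- arXiv:2102.06977 — 10 statements merged into one kernel-verified Lean document; each statement's English description precedes it below -/
import Mathlib

section
/- Let E₁, E₂, E₃ be finite index sets, p ≥ 2, and for i = 1,2,3 let obj_i(f) = g_iᵀf − Σ_e (r_{i,e} f_e² + s_{i,e}|f_e|^p) with g_i ∈ ℝ^{E_i} and r_i, s_i ∈ ℝ^{E_i} nonnegative. Let M₁₂ : ℝ^{E₁} → ℝ^{E₂} and M₂₃ : ℝ^{E₂} → ℝ^{E₃} be linear maps, let κ₁, κ₂ ≥ 1, δ₁, δ₂ ≥ 0, and let C ≥ 0 satisfy ‖M₁₂ v‖₁ ≤ C‖v‖₁ for all v. Suppose that for all f ∈ ℝ^{E₁}, κ₁⁻¹(obj₁(f) − δ₁‖f‖₁) ≤ obj₂(κ₁⁻¹ M₁₂ f), and that for all h ∈ ℝ^{E₂}, κ₂⁻¹(obj₂(h) − δ₂‖h‖₁) ≤ obj₃(κ₂⁻¹ M₂₃ h). Then for all f ∈ ℝ^{E₁}, (κ₁κ₂)⁻¹ (obj₁(f) − (δ₁ + δ₂·C)‖f‖₁) ≤ obj₃((κ₁κ₂)⁻¹ M₂₃(M₁₂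 f)). (Composition of smoothed p-norm approximations.) -/
/-!
The two approximations chain: apply the second one to `h = κ₁⁻¹ • M₁₂ f` and bound `obj₂ h` below
by the first one. Linearity of `M₂₃` merges the two scalings into `(κ₁ * κ₂)⁻¹`, and the additive
loss `δ₂ * ‖h‖₁` is at most `κ₁⁻¹ * δ₂ * C * ‖f‖₁` by the `ℓ₁` bound on `M₁₂`. The shape of the
objectives plays no role.
-/

/-- Composition of smoothed p-norm approximations. -/
theorem smoothed_pnorm_composition
    {E₁ E₂ E₃ : Type*} [Fintype E₁] [Fintype E₂] [Fintype E₃]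
    (p : ℝ) (hp : 2 ≤ p)
    (g₁ r₁ s₁ : E₁ → ℝ) (hr₁ : ∀ e, 0 ≤ r₁ e) (hs₁ : ∀ e, 0 ≤ s₁ e)
    (g₂ r₂ s₂ : E₂ → ℝ) (hr₂ : ∀ e, 0 ≤ r₂ e) (hs₂ : ∀ e, 0 ≤ s₂ e)
    (g₃ r₃ s₃ : E₃ → ℝ) (hr₃ : ∀ e, 0 ≤ r₃ e) (hs₃ : ∀ e, 0 ≤ s₃ e)
    (obj₁ : (E₁ → ℝ) → ℝ) (obj₂ : (E₂ → ℝ) → ℝ) (obj₃ : (E₃ → ℝ) → ℝ)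
    (hobj₁ : ∀ f : E₁ → ℝ,
      obj₁ f = (∑ e, g₁ e * f e) - ∑ e, (r₁ e * f e ^ 2 + s₁ e * |f e| ^ p))
    (hobj₂ : ∀ f : E₂ → ℝ,
      obj₂ f = (∑ e, g₂ e * f e) - ∑ e, (r₂ e * f e ^ 2 + s₂ e * |f e| ^ p))
    (hobj₃ : ∀ f : E₃ → ℝ,
      obj₃ f = (∑ e, g₃ e * f e) - ∑ e, (r₃ e * f e ^ 2 + s₃ e * |f e| ^ p))
    (M₁₂ : (E₁ → ℝ) →ₗ[ℝ] (E₂ → ℝ)) (M₂₃ : (E₂ → ℝ) →ₗ[ℝ] (E₃ → ℝ))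
    (κ₁ κ₂ δ₁ δ₂ C : ℝ) (hκ₁ : 1 ≤ κ₁) (hκ₂ : 1 ≤ κ₂)
    (hδ₁ : 0 ≤ δ₁) (hδ₂ : 0 ≤ δ₂) (hC : 0 ≤ C)
    (hM : ∀ v : E₁ → ℝ, (∑ e, |M₁₂ v e|) ≤ C * ∑ e, |v e|)
    (h₁ : ∀ f : E₁ → ℝ,
      κ₁⁻¹ * (obj₁ f - δ₁ * ∑ e, |f e|) ≤ obj₂ (κ₁⁻¹ • M₁₂ f))
    (h₂ : ∀ h : E₂ → ℝ,
      κ₂⁻¹ * (obj₂ h - δ₂ * ∑ e, |h e|) ≤ obj₃ (κ₂⁻¹ • M₂₃ h))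
    (f : E₁ → ℝ) :
    (κ₁ * κ₂)⁻¹ * (obj₁ f - (δ₁ + δ₂ * C) * ∑ e, |f e|)
      ≤ obj₃ ((κ₁ * κ₂)⁻¹ • M₂₃ (M₁₂ f)) := by
  have hc : 0 ≤ κ₁⁻¹ := by positivity
  have hd : 0 ≤ κ₂⁻¹ := by positivity
  have hl1 : ∑ e, |(κ₁⁻¹ • M₁₂ f) e| ≤ κ₁⁻¹ * (C * ∑ e, |f e|) := by
    calc ∑ e, |(κ₁⁻¹ • M₁₂ f) e| = κ₁⁻¹ * ∑ e, |M₁₂ f e| := by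
          simp only [Pi.smul_apply, smul_eq_mul, abs_mul, abs_of_nonneg hc, Finset.mul_sum]
      _ ≤ κ₁⁻¹ * (C * ∑ e, |f e|) := mul_le_mul_of_nonneg_left (hM f) hc
  have hmap : (κ₁ * κ₂)⁻¹ • M₂₃ (M₁₂ f) = κ₂⁻¹ • M₂₃ (κ₁⁻¹ • M₁₂ f) := by
    rw [map_smul, smul_smul, mul_inv, mul_comm]
  rw [hmap]
  calc (κ₁ * κ₂)⁻¹ * (obj₁ f - (δ₁ + δ₂ * C) * ∑ e, |f e|)
      = κ₂⁻¹ * (κ₁⁻¹ * (obj₁ f - δ₁ * ∑ e, |f e|)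
          - δ₂ * (κ₁⁻¹ * (C * ∑ e, |f e|))) := by
        rw [mul_inv]; ring
    _ ≤ κ₂⁻¹ * (obj₂ (κ₁⁻¹ • M₁₂ f) - δ₂ * ∑ e, |(κ₁⁻¹ • M₁₂ f) e|) :=
        mul_le_mul_of_nonneg_left
          (sub_le_sub (h₁ f) (mul_le_mul_of_nonneg_left hl1 hδ₂)) hd
    _ ≤ obj₃ (κ₂⁻¹ • M₂₃ (κ₁⁻¹ • M₁₂ f)) := h₂ _
end

section
/- Let p ≥ 2 be real, E a finite index set, w ∈ ℝ^E entrywise nonnegative and y ∈ ℝ^E. Suppose Σ_{e∈E} w_e^{p−2} y_e² ≤ ‖w‖_p^{p−2}. Then Σ_{e∈E} w_e^{p−1} |y_e| ≤ ‖w‖_p^{p−1}. (The gradient bound used in the flow-step analysis of the width-reduced multiplicative weights algorithm: |NΔ̃|ᵀ|∇‖w‖_p^p| ≤ p‖w‖_p^{p−1}.) -/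
/-!
Write `S = ∑ w^p`. Splitting `w^(p-1) |y| = w^(p/2) * (w^((p-2)/2) |y|)`, the Cauchy–Schwarz
inequality and the hypothesis give
`(∑ w^(p-1) |y|)^2 ≤ S * ∑ w^(p-2) y^2 ≤ S * S^((p-2)/p) = (S^((p-1)/p))^2`,
and both bases of the outer squares are nonnegative.
-/

/-- The gradient bound used in the flow-step analysis of the width-reduced
multiplicative weights algorithm: if `Σ_e w_e^{p−2} y_e² ≤ ‖w‖_p^{p−2}` then
`Σ_e w_e^{p−1}|y_e| ≤ ‖w‖_p^{p−1}`. -/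
theorem gradient_bound_flow_step
    {E : Type*} [Fintype E] (p : ℝ) (hp : 2 ≤ p)
    (w y : E → ℝ) (hw : ∀ e, 0 ≤ w e)
    (h : ∑ e, w e ^ (p - 2) * y e ^ 2 ≤ (∑ e, w e ^ p) ^ ((p - 2) / p)) :
    ∑ e, w e ^ (p - 1) * |y e| ≤ (∑ e, w e ^ p) ^ ((p - 1) / p) := by
  have hS : 0 ≤ ∑ e, w e ^ p := Finset.sum_nonneg fun e _ => Real.rpow_nonneg (hw e) p
  have hp0 : p ≠ 0 := by linarith
  -- Cauchy–Schwarz for the splitting `w^(p-1) |y| = w^(p/2) * (w^((p-2)/2) |y|)`.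
  have cs := Finset.sum_mul_sq_le_sq_mul_sq Finset.univ
    (fun e => w e ^ (p / 2)) (fun e => w e ^ ((p - 2) / 2) * |y e|)
  have e1 : ∀ e, w e ^ (p / 2) * (w e ^ ((p - 2) / 2) * |y e|) = w e ^ (p - 1) * |y e| := by
    intro e
    rw [← mul_assoc, ← Real.rpow_add_of_nonneg (hw e) (by linarith) (by linarith)]
    ring_nf
  have e2 : ∀ e, (w e ^ (p / 2)) ^ 2 = w e ^ p := by
    intro e
    rw [← Real.rpow_mul_natCast (hw e)]
    congr 1
    push_cast
    ring
  have e3 : ∀ e, (w e ^ ((p - 2) / 2) * |y e|) ^ 2 = w e ^ (p - 2) * y e ^ 2 := by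
    intro e
    rw [mul_pow, sq_abs, ← Real.rpow_mul_natCast (hw e)]
    congr 2
    push_cast
    ring
  simp only [e1, e2, e3] at cs
  refine (sq_le_sq₀ (Finset.sum_nonneg fun e _ =>
    mul_nonneg (Real.rpow_nonneg (hw e) _) (abs_nonneg _)) (Real.rpow_nonneg hS _)).mp ?_
  calc (∑ e, w e ^ (p - 1) * |y e|) ^ 2
      ≤ (∑ e, w e ^ p) * ∑ e, w e ^ (p - 2) * y e ^ 2 := cs
    _ ≤ (∑ e, w e ^ p) * (∑ e, w e ^ p) ^ ((p - 2) / p) := mul_le_mul_of_nonneg_left h hS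
    _ = ((∑ e, w e ^ p) ^ ((p - 1) / p)) ^ 2 := by
      rw [← Real.rpow_mul_natCast hS]
      -- Nonnegativity of both exponents lets them be added even when the sum is `0`.
      nth_rewrite 1 [← Real.rpow_one (∑ e, w e ^ p)]
      rw [← Real.rpow_add_of_nonneg hS zero_le_one (div_nonneg (by linarith) (by linarith))]
      congr 1
      push_cast
      field_simp
      ring
end

section
/- Let p > 2 be real, E a finite index set, w ∈ ℝ^E entrywise nonnegative, y ∈ ℝ^E, and ρ, β > 0. Suppose Σ_{e∈E} w_e^{p−2} y_e² ≤ ‖w‖_p^{p−2}, and let H = {e ∈ E : |y_e| ≥ ρ and w_e^{p−2} ≤ β}. Then Σ_{e∈H} w_e^p ≤ ρ^{−2} β^{2/(p−2)} ‖w‖_p^{p−2}. (The width-reduction step only increases the weight potential Φ = ‖w‖_p^p by a controlled amount, since the p-th powers of the weights on low-resistance, high-flow edges are bounded.) -/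
/-!
On an edge `e` of the width-reduction set the weight satisfies
`w ^ 2 = (w ^ (p - 2)) ^ (2 / (p - 2)) ≤ β ^ (2 / (p - 2))`, because the resistance
`w ^ (p - 2)` is at most `β`, and `1 ≤ y ^ 2 / ρ ^ 2`, because `|y| ≥ ρ`. Hence `w ^ p` is at most
`ρ⁻² β ^ (2 / (p - 2))` times the energy `w ^ (p - 2) * y ^ 2` of the edge. Summing, and
bounding the energy of the set by the total energy, gives the claim.
-/

/-- The width-reduction step only increases the weight potential `Φ = ‖w‖_p^p`
by a controlled amount: the p-th powers of the weights on low-resistance,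
high-flow edges are bounded. -/
theorem width_reduction_potential_bound
    {E : Type*} [Fintype E] (p : ℝ) (hp : 2 < p)
    (w y : E → ℝ) (hw : ∀ e, 0 ≤ w e) (ρ β : ℝ) (hρ : 0 < ρ) (hβ : 0 < β)
    (h : ∑ e, w e ^ (p - 2) * y e ^ 2 ≤ (∑ e, w e ^ p) ^ ((p - 2) / p)) :
    ∑ e ∈ Finset.univ.filter (fun e => ρ ≤ |y e| ∧ w e ^ (p - 2) ≤ β), w e ^ p
      ≤ (ρ ^ 2)⁻¹ * β ^ (2 / (p - 2)) * (∑ e, w e ^ p) ^ ((p - 2) / p) := by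
  have hq : 0 < p - 2 := by linarith
  have hB : 0 ≤ β ^ (2 / (p - 2)) := Real.rpow_nonneg hβ.le _
  have hC : 0 ≤ (ρ ^ 2)⁻¹ * β ^ (2 / (p - 2)) := by positivity
  have hr : ∀ e, 0 ≤ w e ^ (p - 2) := fun e => Real.rpow_nonneg (hw e) _
  have key : ∀ e, ρ ≤ |y e| → w e ^ (p - 2) ≤ β →
      w e ^ p ≤ (ρ ^ 2)⁻¹ * β ^ (2 / (p - 2)) * (w e ^ (p - 2) * y e ^ 2) := by
    intro e h1 h2
    have hsplit : w e ^ p = w e ^ (p - 2) * (w e ^ (p - 2)) ^ (2 / (p - 2)) := by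
      rw [← Real.rpow_mul (hw e), mul_div_cancel₀ _ hq.ne',
        ← Real.rpow_add_of_nonneg (hw e) hq.le (by norm_num), sub_add_cancel]
    have hpow : (w e ^ (p - 2)) ^ (2 / (p - 2)) ≤ β ^ (2 / (p - 2)) :=
      Real.rpow_le_rpow (hr e) h2 (by positivity)
    have hy : 1 ≤ (ρ ^ 2)⁻¹ * y e ^ 2 := by
      rw [inv_mul_eq_div, one_le_div (by positivity), ← sq_abs (y e)]
      gcongr
    calc w e ^ p = w e ^ (p - 2) * (w e ^ (p - 2)) ^ (2 / (p - 2)) := hsplit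
      _ ≤ w e ^ (p - 2) * β ^ (2 / (p - 2)) := mul_le_mul_of_nonneg_left hpow (hr e)
      _ ≤ w e ^ (p - 2) * β ^ (2 / (p - 2)) * ((ρ ^ 2)⁻¹ * y e ^ 2) :=
        le_mul_of_one_le_right (mul_nonneg (hr e) hB) hy
      _ = _ := by ring
  refine le_trans ?_ (mul_le_mul_of_nonneg_left h hC)
  rw [Finset.mul_sum]
  refine (Finset.sum_le_sum fun e he => ?_).trans
    (Finset.sum_le_sum_of_subset_of_nonneg (Finset.filter_subset _ _) fun e _ _ =>
      mul_nonneg hC (mul_nonneg (hr e) (sq_nonneg (y e))))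
  obtain ⟨h1, h2⟩ := (Finset.mem_filter.mp he).2
  exact key e h1 h2
end

section
/- Let p ≥ 2, let M ∈ ℝ^{m₂×n}, N ∈ ℝ^{m₁×n}, A ∈ ℝ^{d×n} with A surjective (full row rank), c ∈ ℝ^d, and let r, r′ ∈ ℝ^{m₁} satisfy 0 < r_e ≤ r′_e for all e. For a resistance vector ρ define E_ρ(Δ) = m₁^{(p−2)/p} ΔᵀMᵀMΔ + 3^{−(p−2)} Σ_e ρ_e (NΔ)_e². Suppose MᵀM + Nᵀdiag(r)N is positive definite and Δ̃ minimizes E_r over {Δ : AΔ = c}. Then for every Δ′ with AΔ′ = c, E_{r′}(Δ′) ≥ E_r(Δ̃) + 3^{−(p−2)} Σ_e (1 − r_e/r′_e) r_e (NΔ̃)_e². (Increasing resistances increases the optimal quadratic energy by at least the stated amount.) -/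
open Matrix

/-!
Write `Δ' = Δt + δ` with `A δ = 0`. Minimality of `Δt` on the affine space `A Δ = c` says that the
quadratic `t ↦ E_r(Δt + t δ)` is smallest at `t = 0`, so its linear coefficient vanishes:
`a ⟨M Δt, M δ⟩ + b ∑ r_e (N Δt)_e (N δ)_e = 0`, where `a` and `b` are the two scalar weights
(`first_order_optimality`).
For each `e`, with `x = (N Δt)_e` and `y = (N δ)_e`, completing the square gives
`r' (x + y)² ≥ 2 r x (x + y) - (r² / r') x²` (`weighted_sq_lower_bound`), and
`|M Δ'|² ≥ |M Δt|² + 2 ⟨M Δt, M δ⟩`. In the weighted sum of these bounds the cross terms cancel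
by optimality, and what remains is the claimed lower bound.
-/

/-- Completing the square: the difference of the two sides is `r' (x + y - (r / r') x)²`. -/
lemma weighted_sq_lower_bound {r r' : ℝ} (hr' : 0 < r') (x y : ℝ) :
    r * x ^ 2 + (1 - r / r') * r * x ^ 2 + 2 * (r * (x * y)) ≤ r' * (x + y) ^ 2 := by
  have h : r' * (x + y) ^ 2 - (r * x ^ 2 + (1 - r / r') * r * x ^ 2 + 2 * (r * (x * y)))
      = r' * (x + y - r / r' * x) ^ 2 := by
    field_simp
    ring
  have : 0 ≤ r' * (x + y - r / r' * x) ^ 2 := by positivity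
  linarith

lemma dotProduct_self_add {m : ℕ} (u v : Fin m → ℝ) :
    (u + v) ⬝ᵥ (u + v) = u ⬝ᵥ u + 2 * (u ⬝ᵥ v) + v ⬝ᵥ v := by
  rw [add_dotProduct, dotProduct_add, dotProduct_add, dotProduct_comm v u]
  ring

/-- If `(u, x)` minimizes `a |u|² + b ∑ r x²` along the line through it in direction `(v, y)`,
then the directional derivative (up to the factor 2) vanishes there. -/
lemma first_order_optimality {m₁ m₂ : ℕ} (a b : ℝ) (r x y : Fin m₁ → ℝ) (u v : Fin m₂ → ℝ)
    (h : ∀ t : ℝ, a * (u ⬝ᵥ u) + b * ∑ e, r e * x e ^ 2 ≤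
      a * ((u + t • v) ⬝ᵥ (u + t • v)) + b * ∑ e, r e * (x e + t * y e) ^ 2) :
    a * (u ⬝ᵥ v) + b * ∑ e, r e * (x e * y e) = 0 := by
  have hsum : ∀ t : ℝ, ∑ e, r e * (x e + t * y e) ^ 2 = ∑ e, r e * x e ^ 2
      + 2 * t * ∑ e, r e * (x e * y e) + t ^ 2 * ∑ e, r e * y e ^ 2 := by
    intro t
    simp only [Finset.mul_sum, ← Finset.sum_add_distrib]
    exact Finset.sum_congr rfl fun e _ => by ring
  -- A quadratic in `t` that is nonnegative and vanishes at `0` has discriminant `(2 L)² ≤ 0`.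
  have hquad : ∀ t : ℝ, 0 ≤ (a * (v ⬝ᵥ v) + b * ∑ e, r e * y e ^ 2) * (t * t)
      + (2 * (a * (u ⬝ᵥ v) + b * ∑ e, r e * (x e * y e))) * t + 0 := by
    intro t
    have ht := h t
    rw [hsum, dotProduct_self_add, dotProduct_smul, dotProduct_smul, smul_dotProduct] at ht
    simp only [smul_eq_mul] at ht
    linarith
  have hd := discrim_le_zero hquad
  rw [discrim] at hd
  nlinarith


/-- Increasing resistances increases the optimal quadratic energy by at least
the stated amount. -/
theorem energy_increase_with_resistances
    {m₁ m₂ n d : ℕ} (p : ℝ) (hp : 2 ≤ p)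
    (M : Matrix (Fin m₂) (Fin n) ℝ) (N : Matrix (Fin m₁) (Fin n) ℝ)
    (A : Matrix (Fin d) (Fin n) ℝ) (hA : Function.Surjective (A.mulVec))
    (c : Fin d → ℝ) (r r' : Fin m₁ → ℝ)
    (hr : ∀ e, 0 < r e) (hrr' : ∀ e, r e ≤ r' e)
    (Energy : (Fin m₁ → ℝ) → (Fin n → ℝ) → ℝ)
    (hEnergy : ∀ (ρ : Fin m₁ → ℝ) (Δ : Fin n → ℝ),
      Energy ρ Δ = (m₁ : ℝ) ^ ((p - 2) / p) * ((M *ᵥ Δ) ⬝ᵥ (M *ᵥ Δ))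
        + (3 : ℝ) ^ (-(p - 2)) * ∑ e, ρ e * ((N *ᵥ Δ) e) ^ 2)
    (hposdef : (Mᵀ * M + Nᵀ * Matrix.diagonal r * N).PosDef)
    (Δt : Fin n → ℝ) (hΔt : A *ᵥ Δt = c)
    (hmin : ∀ Δ : Fin n → ℝ, A *ᵥ Δ = c → Energy r Δt ≤ Energy r Δ)
    (Δ' : Fin n → ℝ) (hΔ' : A *ᵥ Δ' = c) :
    Energy r' Δ' ≥ Energy r Δt
      + (3 : ℝ) ^ (-(p - 2)) * ∑ e, (1 - r e / r' e) * r e * ((N *ᵥ Δt) e) ^ 2 := by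
  obtain ⟨δ, rfl⟩ : ∃ δ, Δ' = Δt + δ := ⟨Δ' - Δt, by simp⟩
  have hδ : A *ᵥ δ = 0 := by
    rw [mulVec_add, hΔt] at hΔ'
    simpa using hΔ'
  have hopt := first_order_optimality ((m₁ : ℝ) ^ ((p - 2) / p)) ((3 : ℝ) ^ (-(p - 2)))
    r (N *ᵥ Δt) (N *ᵥ δ) (M *ᵥ Δt) (M *ᵥ δ) (by
      intro t
      have ht := hmin (Δt + t • δ) (by rw [mulVec_add, mulVec_smul, hδ, hΔt]; simp)
      simpa only [hEnergy, mulVec_add, mulVec_smul, Pi.add_apply, Pi.smul_apply,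
        smul_eq_mul] using ht)
  have ha : 0 ≤ (m₁ : ℝ) ^ ((p - 2) / p) := by positivity
  have hb : 0 ≤ (3 : ℝ) ^ (-(p - 2)) := by positivity
  have hN := Finset.sum_le_sum fun e (_ : e ∈ Finset.univ) =>
    weighted_sq_lower_bound (r := r e) ((hr e).trans_le (hrr' e)) ((N *ᵥ Δt) e) ((N *ᵥ δ) e)
  simp only [Finset.sum_add_distrib, ← Finset.mul_sum] at hN
  have hN' := mul_le_mul_of_nonneg_left hN hb
  have hv : 0 ≤ (M *ᵥ δ) ⬝ᵥ (M *ᵥ δ) :=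
    Finset.sum_nonneg fun i _ => mul_self_nonneg _
  have hv' := mul_nonneg ha hv
  simp only [hEnergy, mulVec_add, dotProduct_self_add, Pi.add_apply]
  linarith
end

section
/- Let p ≥ 2, let M ∈ ℝ^{m₂×n}, N ∈ ℝ^{m₁×n}, A ∈ ℝ^{d×n}, c ∈ ℝ^d, and let w ∈ ℝ^{m₁} be entrywise nonnegative. Suppose there exists Δ* with AΔ* = c, Δ*ᵀMᵀMΔ* ≤ 1 and ‖NΔ*‖_p ≤ 1. Then inf over {Δ : AΔ = c} of [m₁^{(p−2)/p} ΔᵀMᵀMΔ + 3^{−(p−2)} Σ_e w_e^{p−2} (NΔ)_e²] is at most m₁^{(p−2)/p} + 3^{−(p−2)} ‖w‖_p^{p−2}. (Upper bound on the energy potential Ψ at every step of the width-reduced algorithm.) -/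
open Matrix

/-!
The infimum is over values that are all nonnegative, so it is at most the value at the feasible
point `Δstar`. There the quadratic term is at most `m₁ ^ ((p - 2) / p)`, and Hölder's inequality
with the conjugate exponents `p / (p - 2)` and `p / 2` bounds the weighted sum of squares by
`‖w‖_p ^ (p - 2) * ‖N Δstar‖_p ^ 2`, where the last factor is at most one
(`sum_rpow_mul_sq_le`).
-/

/-- Hölder's inequality with exponents `p / (p - 2)` and `p / 2`, for `x` in the unit ball of
`ℓ_p`. -/
lemma sum_rpow_mul_sq_le {ι : Type*} [Fintype ι] {p : ℝ} (hp : 2 ≤ p) (w x : ι → ℝ)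
    (hw : ∀ e, 0 ≤ w e) (hx : ∑ e, |x e| ^ p ≤ 1) :
    ∑ e, w e ^ (p - 2) * x e ^ 2 ≤ (∑ e, w e ^ p) ^ ((p - 2) / p) := by
  -- At `p = 2` the exponent `p / (p - 2)` is infinite and both sides degenerate.
  rcases hp.eq_or_lt with rfl | hp2
  · simpa using hx
  have hp0 : 0 < p := by linarith
  have hq : 0 < p - 2 := by linarith
  have hconj : (p / (p - 2)).HolderConjugate (p / 2) := by
    rw [Real.holderConjugate_iff]
    refine ⟨by rw [lt_div_iff₀ hq]; linarith, ?_⟩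
    field_simp
    ring
  have h := Real.inner_le_Lp_mul_Lq_of_nonneg Finset.univ hconj
    (f := fun e => w e ^ (p - 2)) (g := fun e => x e ^ 2)
    (fun e _ => Real.rpow_nonneg (hw e) _) (fun e _ => sq_nonneg _)
  have h1 : ∀ e, (w e ^ (p - 2)) ^ (p / (p - 2)) = w e ^ p := fun e => by
    rw [← Real.rpow_mul (hw e), mul_div_cancel₀ _ hq.ne']
  have h2 : ∀ e, (x e ^ 2) ^ (p / 2) = |x e| ^ p := fun e => by
    rw [← sq_abs, ← Real.rpow_natCast, ← Real.rpow_mul (abs_nonneg _)]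
    congr 1
    push_cast
    ring
  simp only [h1, h2, one_div_div] at h
  refine h.trans (mul_le_of_le_one_right ?_ ?_)
  · exact Real.rpow_nonneg (Finset.sum_nonneg fun e _ => Real.rpow_nonneg (hw e) _) _
  · exact Real.rpow_le_one (Finset.sum_nonneg fun e _ => Real.rpow_nonneg (abs_nonneg _) _) hx
      (by positivity)

/-- Upper bound on the energy potential Ψ at every step of the width-reduced
algorithm. -/
theorem energy_potential_upper_bound
    {m₁ m₂ n d : ℕ} (p : ℝ) (hp : 2 ≤ p)
    (M : Matrix (Fin m₂) (Fin n) ℝ) (N : Matrix (Fin m₁) (Fin n) ℝ)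
    (A : Matrix (Fin d) (Fin n) ℝ) (c : Fin d → ℝ)
    (w : Fin m₁ → ℝ) (hw : ∀ e, 0 ≤ w e)
    (Δstar : Fin n → ℝ) (hfeas : A *ᵥ Δstar = c)
    (hquad : (M *ᵥ Δstar) ⬝ᵥ (M *ᵥ Δstar) ≤ 1)
    (hlp : (∑ e, |(N *ᵥ Δstar) e| ^ p) ^ (1 / p) ≤ 1) :
    sInf ((fun Δ : Fin n → ℝ =>
        (m₁ : ℝ) ^ ((p - 2) / p) * ((M *ᵥ Δ) ⬝ᵥ (M *ᵥ Δ))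
          + (3 : ℝ) ^ (-(p - 2)) * ∑ e, w e ^ (p - 2) * ((N *ᵥ Δ) e) ^ 2) ''
        {Δ : Fin n → ℝ | A *ᵥ Δ = c})
      ≤ (m₁ : ℝ) ^ ((p - 2) / p)
        + (3 : ℝ) ^ (-(p - 2)) * (∑ e, w e ^ p) ^ ((p - 2) / p) := by
  have hp0 : 0 < p := by linarith
  have hx : ∑ e, |(N *ᵥ Δstar) e| ^ p ≤ 1 := by
    by_contra! hlt
    exact absurd hlp (not_le.mpr (Real.one_lt_rpow hlt (by positivity)))
  -- The real `sInf` is a lower bound only because the set of values is bounded below, here by `0`.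
  refine csInf_le_of_le ⟨0, ?_⟩ (Set.mem_image_of_mem _ hfeas) ?_
  · rintro _ ⟨Δ, -, rfl⟩
    have hM : 0 ≤ (M *ᵥ Δ) ⬝ᵥ (M *ᵥ Δ) := Finset.sum_nonneg fun i _ => mul_self_nonneg _
    have hN : 0 ≤ ∑ e, w e ^ (p - 2) * ((N *ᵥ Δ) e) ^ 2 :=
      Finset.sum_nonneg fun e _ => mul_nonneg (Real.rpow_nonneg (hw e) _) (sq_nonneg _)
    dsimp only
    positivity
  · refine add_le_add (mul_le_of_le_one_right (by positivity) hquad) ?_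
    exact mul_le_mul_of_nonneg_left (sum_rpow_mul_sq_le hp w _ hw hx) (by positivity)
end

section
/- Let p ≥ 2 be real, M ∈ ℝ^{m₁×n}, N ∈ ℝ^{m₂×n}, b ∈ ℝⁿ, and define f(x) = bᵀx + ‖Mx‖₂² + ‖Nx‖_p^p. For x ∈ ℝⁿ set g = (1/p)b + (2/p)MᵀMx + Nᵀ(|Nx|^{p−2} ⊙ (Nx)) and R = (2/p²)MᵀM + 2NᵀDiag(|Nx|^{p−2})N, and res_x(Δ) = gᵀΔ − ΔᵀRΔ − ‖NΔ‖_p^p. Then for all x, Δ ∈ ℝⁿ: f(x − Δ/p) ≤ f(x) − res_x(Δ). (Each step of iterative refinement decreases the objective by at least the value of the residual.) -/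
open Matrix

/-!
The linear and quadratic parts of `f` expand exactly, and the quadratic remainder
`‖MΔ‖² / p²` is at most the term `2‖MΔ‖² / p²` subtracted in the residual. The `p`-norm part is handled one
coordinate at a time by the scalar inequality
`|a - d/p|^p ≤ |a|^p - |a|^(p-2) a d + 2 |a|^(p-2) d² + |d|^p`.
By homogeneity this reduces to `a = 1`, that is `|1 - s/p|^p ≤ 1 - s + 2 s² + |s|^p`. For `|s| ≥ 2`
one has `|1 - s/p| ≤ |s|` and the last term alone suffices. For `|s| ≤ 2` the left-hand side is at most
`exp (-s)`, which is bounded by `1 - s + 2 s²`.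
-/

/-- The scalar inequality for the `p`-norm term, normalised to `a = 1`. -/
lemma abs_one_sub_div_rpow_le (p : ℝ) (hp : 2 ≤ p) (s : ℝ) :
    |1 - s / p| ^ p ≤ 1 - s + 2 * s ^ 2 + |s| ^ p := by
  have hp0 : 0 < p := by linarith
  have hsp : 0 ≤ |s| ^ p := by positivity
  have hdiv : |s / p| ≤ |s| / 2 := by
    rw [abs_div, abs_of_pos hp0]
    gcongr
  rcases le_total 2 |s| with h | h
  · have h1 : |1 - s / p| ≤ |s| := by
      have := abs_sub (1 : ℝ) (s / p)
      rw [abs_one] at this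
      linarith
    have h2 : |1 - s / p| ^ p ≤ |s| ^ p := by gcongr
    nlinarith [sq_nonneg (s - 1), sq_nonneg s]
  · have hs : 0 ≤ 1 - s / p := by
      have := (abs_le.mp hdiv).2
      linarith
    have h1 : |1 - s / p| ^ p ≤ Real.exp (-s) := by
      rw [abs_of_nonneg hs]
      calc (1 - s / p) ^ p ≤ (Real.exp (-(s / p))) ^ p := by
            gcongr
            linarith [Real.add_one_le_exp (-(s / p))]
        _ = Real.exp (-s) := by
            rw [← Real.exp_mul]
            congr 1
            field_simp
    -- The bound `exp v ≤ 1 + v + v²` holds for `|v| ≤ 1` only, so it is applied at `v = -s/2` and squared.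
    obtain ⟨v, hv⟩ : ∃ v, v = -s / 2 := ⟨_, rfl⟩
    have hs2 := abs_le.mp h
    have hv1 : |v| ≤ 1 := by
      rw [abs_le]
      constructor <;> linarith
    have h2 : Real.exp v ≤ 1 + v + v ^ 2 := by
      have := (abs_le.mp (Real.abs_exp_sub_one_sub_id_le hv1)).2
      linarith
    have h3 : Real.exp (-s) = Real.exp v ^ 2 := by
      rw [← Real.exp_nat_mul]
      congr 1
      rw [hv]
      push_cast
      ring
    have h4 : Real.exp v ^ 2 ≤ (1 + v + v ^ 2) ^ 2 := by gcongr
    have h5 : (1 + v + v ^ 2) ^ 2 ≤ 1 + 2 * v + 8 * v ^ 2 := by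
      have := abs_le.mp hv1
      have h6 : 0 ≤ 5 - 2 * v - v ^ 2 := by nlinarith
      nlinarith [mul_nonneg (sq_nonneg v) h6]
    have h7 : s = -2 * v := by linarith
    rw [h3] at h1
    rw [h7] at h1 hsp ⊢
    nlinarith

lemma abs_sub_div_rpow_le (p : ℝ) (hp : 2 ≤ p) (a d : ℝ) :
    |a - d / p| ^ p ≤ |a| ^ p - |a| ^ (p - 2) * a * d + 2 * (|a| ^ (p - 2) * d ^ 2)
      + |d| ^ p := by
  have hp0 : 0 < p := by linarith
  by_cases ha : a = 0
  · subst ha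
    have h1 : |0 - d / p| ^ p ≤ |d| ^ p := by
      refine Real.rpow_le_rpow (abs_nonneg _) ?_ hp0.le
      rw [zero_sub, abs_neg, abs_div, abs_of_pos hp0]
      exact div_le_self (abs_nonneg d) (by linarith)
    have h2 : 0 ≤ |(0 : ℝ)| ^ (p - 2) * d ^ 2 := by positivity
    have h3 : |(0 : ℝ)| ^ p = 0 := by rw [abs_zero, Real.zero_rpow hp0.ne']
    rw [h3, mul_zero, zero_mul, sub_zero, zero_add]
    exact h1.trans (le_add_of_nonneg_left (mul_nonneg zero_le_two h2))
  · obtain ⟨s, rfl⟩ : ∃ s, d = a * s := ⟨d / a, by field_simp⟩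
    have hpow : |a| ^ p = |a| ^ (p - 2) * a ^ 2 := by
      rw [← sq_abs a, ← Real.rpow_natCast |a| 2, ← Real.rpow_add (abs_pos.mpr ha)]
      congr 1
      push_cast
      ring
    have hfac : a - a * s / p = a * (1 - s / p) := by ring
    rw [hfac, abs_mul, abs_mul, Real.mul_rpow (abs_nonneg _) (abs_nonneg _),
      Real.mul_rpow (abs_nonneg _) (abs_nonneg _)]
    have h := mul_le_mul_of_nonneg_left (abs_one_sub_div_rpow_le p hp s)
      (by positivity : 0 ≤ |a| ^ p)
    have e : |a| ^ p * (1 - s + 2 * s ^ 2 + |s| ^ p) = |a| ^ p - |a| ^ (p - 2) * a * (a * s)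
        + 2 * (|a| ^ (p - 2) * (a * s) ^ 2) + |a| ^ p * |s| ^ p := by
      rw [hpow]
      ring
    linarith

/-- Each step of iterative refinement decreases the objective by at least the
value of the residual: `f(x − Δ/p) ≤ f(x) − res_x(Δ)`. -/
theorem iterative_refinement_decrease
    {m₁ m₂ n : ℕ} (p : ℝ) (hp : 2 ≤ p)
    (M : Matrix (Fin m₁) (Fin n) ℝ) (N : Matrix (Fin m₂) (Fin n) ℝ)
    (b : Fin n → ℝ)
    (f : (Fin n → ℝ) → ℝ)
    (hf : ∀ y : Fin n → ℝ,
      f y = b ⬝ᵥ y + ∑ i, ((M *ᵥ y) i) ^ 2 + ∑ i, |(N *ᵥ y) i| ^ p)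
    (x Δ : Fin n → ℝ)
    (g : Fin n → ℝ)
    (hg : g = (1 / p) • b + (2 / p) • (Mᵀ *ᵥ (M *ᵥ x))
        + Nᵀ *ᵥ (fun i => |(N *ᵥ x) i| ^ (p - 2) * (N *ᵥ x) i))
    (res : (Fin n → ℝ) → ℝ)
    (hres : ∀ Δ' : Fin n → ℝ,
      res Δ' = g ⬝ᵥ Δ'
        - ((2 / p ^ 2) * ((M *ᵥ Δ') ⬝ᵥ (M *ᵥ Δ'))
            + 2 * ∑ i, |(N *ᵥ x) i| ^ (p - 2) * ((N *ᵥ Δ') i) ^ 2)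
        - ∑ i, |(N *ᵥ Δ') i| ^ p) :
    f (x - (1 / p) • Δ) ≤ f x - res Δ := by
  have hp0 : 0 < p := by linarith
  have hN : ∑ i, |(N *ᵥ (x - (1 / p) • Δ)) i| ^ p
      ≤ ∑ i, |(N *ᵥ x) i| ^ p
        - ∑ i, |(N *ᵥ x) i| ^ (p - 2) * (N *ᵥ x) i * (N *ᵥ Δ) i
        + 2 * ∑ i, |(N *ᵥ x) i| ^ (p - 2) * ((N *ᵥ Δ) i) ^ 2
        + ∑ i, |(N *ᵥ Δ) i| ^ p := by
    rw [Finset.mul_sum, ← Finset.sum_sub_distrib, ← Finset.sum_add_distrib,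
      ← Finset.sum_add_distrib]
    refine Finset.sum_le_sum fun i _ => ?_
    have h := abs_sub_div_rpow_le p hp ((N *ᵥ x) i) ((N *ᵥ Δ) i)
    have e : (N *ᵥ (x - (1 / p) • Δ)) i = (N *ᵥ x) i - (N *ᵥ Δ) i / p := by
      rw [mulVec_sub, mulVec_smul, Pi.sub_apply, Pi.smul_apply, smul_eq_mul]
      ring
    rwa [e]
  have hM : ∑ i, ((M *ᵥ (x - (1 / p) • Δ)) i) ^ 2
      = ∑ i, ((M *ᵥ x) i) ^ 2 - (2 / p) * ((M *ᵥ x) ⬝ᵥ (M *ᵥ Δ))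
        + (1 / p ^ 2) * ((M *ᵥ Δ) ⬝ᵥ (M *ᵥ Δ)) := by
    simp only [dotProduct]
    rw [Finset.mul_sum, Finset.mul_sum, ← Finset.sum_sub_distrib, ← Finset.sum_add_distrib]
    refine Finset.sum_congr rfl fun i _ => ?_
    rw [mulVec_sub, mulVec_smul, Pi.sub_apply, Pi.smul_apply, smul_eq_mul]
    ring
  have hb : b ⬝ᵥ (x - (1 / p) • Δ) = b ⬝ᵥ x - (1 / p) * (b ⬝ᵥ Δ) := by
    rw [dotProduct_sub, dotProduct_smul, smul_eq_mul]
  have hgΔ : g ⬝ᵥ Δ = (1 / p) * (b ⬝ᵥ Δ) + (2 / p) * ((M *ᵥ x) ⬝ᵥ (M *ᵥ Δ))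
      + ∑ i, |(N *ᵥ x) i| ^ (p - 2) * (N *ᵥ x) i * (N *ᵥ Δ) i := by
    rw [hg, add_dotProduct, add_dotProduct, smul_dotProduct, smul_dotProduct,
      mulVec_transpose, mulVec_transpose, ← dotProduct_mulVec, ← dotProduct_mulVec]
    rfl
  have hMM : 0 ≤ (1 / p ^ 2) * ((M *ᵥ Δ) ⬝ᵥ (M *ᵥ Δ)) := by
    have : 0 ≤ (M *ᵥ Δ) ⬝ᵥ (M *ᵥ Δ) := Finset.sum_nonneg fun i _ => mul_self_nonneg _
    positivity
  have h2 : (2 / p ^ 2) * ((M *ᵥ Δ) ⬝ᵥ (M *ᵥ Δ))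
      = 2 * ((1 / p ^ 2) * ((M *ᵥ Δ) ⬝ᵥ (M *ᵥ Δ))) := by ring
  rw [hf, hf, hres, hgΔ, hM, hb, h2]
  linarith
end

section
/- Let p ≥ 2 be real, M ∈ ℝ^{m₁×n}, N ∈ ℝ^{m₂×n}, b ∈ ℝⁿ, f(x) = bᵀx + ‖Mx‖₂² + ‖Nx‖_p^p, and let res_x(Δ) = gᵀΔ − ΔᵀRΔ − ‖NΔ‖_p^p be the residual at x, with g = (1/p)b + (2/p)MᵀMx + Nᵀ(|Nx|^{p−2}⊙(Nx)) and R = (2/p²)MᵀM + 2NᵀDiag(|Nx|^{p−2})N. Then for all x, Δ ∈ ℝⁿ: f(x) − f(x − 16Δ) ≤ 16p·res_x(Δ). (The residual certifies at least a 1/(16p) fraction of the achievable decrease; this yields the O(p·κ·log(1/ε)) iteration bound of iterative refinement.) -/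
open Matrix

/-!
The inequality splits over the linear term, the rows of `M` and the rows of `N`.

* The linear terms agree, and for a row of `M` the claim is `32 / p ≤ 256`.
* For a row of `N`, with `a = (N x)ᵢ` and `d = (N Δ)ᵢ`, it is the scalar inequality
  `|a|^p - |a - 16 d|^p ≤ 16 p (|a|^(p-2) a d - 2 |a|^(p-2) d² - |d|^p)`
  (`scalar_progress`), which by homogeneity reduces to `a = 1` (`scalar_progress_one`).

For `a = 1`, Bernoulli's inequality with exponent `p / 2 ≥ 1` applied to `|1 - 16 d|^p =
((1 - 16 d)²)^(p/2)` gives `|1 - 16 d|^p ≥ 1 - 16 p d + 128 p d²`, four times the quadratic term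
that is needed. If `|d| ≤ 1`, the surplus absorbs `16 p |d|^p ≤ 16 p d²`. If `|d| > 1`, half of
`|1 - 16 d|^p` already dominates the quadratic part, and the other half dominates `16 p |d|^p`
because `|1 - 16 d| ≥ 8 |d|` and `8^p ≥ 32 p`.
-/

lemma thirty_two_mul_le_eight_rpow {p : ℝ} (hp : 2 ≤ p) : 32 * p ≤ (8 : ℝ) ^ p := by
  have h := one_add_mul_self_le_rpow_one_add (s := (7 : ℝ)) (by norm_num)
    (p := p - 1) (by linarith)
  have h8 : (8 : ℝ) ^ p = 8 * (1 + 7 : ℝ) ^ (p - 1) := by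
    rw [show (1 + 7 : ℝ) = 8 by norm_num, Real.rpow_sub_one (by norm_num)]
    ring
  rw [h8]
  linarith

lemma quadratic_le_abs_rpow {p : ℝ} (hp : 2 ≤ p) (d : ℝ) :
    1 - 16 * p * d + 128 * p * d ^ 2 ≤ |1 - 16 * d| ^ p := by
  have h := one_add_mul_self_le_rpow_one_add (s := (1 - 16 * d) ^ 2 - 1)
    (by nlinarith [sq_nonneg (1 - 16 * d)]) (p := p / 2) (by linarith)
  have e : (1 + ((1 - 16 * d) ^ 2 - 1)) ^ (p / 2) = |1 - 16 * d| ^ p := by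
    rw [add_sub_cancel, ← sq_abs, ← Real.rpow_natCast, ← Real.rpow_mul (abs_nonneg _)]
    congr 1
    push_cast
    ring
  rw [e] at h
  linarith

lemma scalar_progress_one {p : ℝ} (hp : 2 ≤ p) (d : ℝ) :
    1 - |1 - 16 * d| ^ p ≤ 16 * p * (d - 2 * d ^ 2 - |d| ^ p) := by
  have hq := quadratic_le_abs_rpow hp d
  rcases le_or_gt |d| 1 with hd | hd
  · have h1 : |d| ^ p ≤ d ^ 2 := by
      rw [← sq_abs d, ← Real.rpow_natCast]
      rcases eq_or_ne d 0 with rfl | h0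
      · simp [Real.zero_rpow (show p ≠ 0 by linarith)]
      · exact Real.rpow_le_rpow_of_exponent_ge (abs_pos.mpr h0) hd (by simpa using hp)
    have h2 : p * |d| ^ p ≤ p * d ^ 2 := mul_le_mul_of_nonneg_left h1 (by linarith)
    have h3 : 0 ≤ p * d ^ 2 := by positivity
    linarith
  · have h1 : 8 * |d| ≤ |1 - 16 * d| := by
      have := abs_sub_abs_le_abs_sub (16 * d) 1
      rw [abs_sub_comm, abs_mul, abs_one, abs_of_pos (by norm_num : (0 : ℝ) < 16)] at this
      linarith
    have h2 : 8 ^ p * |d| ^ p ≤ |1 - 16 * d| ^ p := by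
      rw [← Real.mul_rpow (by norm_num) (abs_nonneg _)]
      exact Real.rpow_le_rpow (by positivity) h1 (by linarith)
    have h3 : 32 * p * |d| ^ p ≤ 8 ^ p * |d| ^ p :=
      mul_le_mul_of_nonneg_right (thirty_two_mul_le_eight_rpow hp) (by positivity)
    have h4 : 1 ≤ d ^ 2 + d + 1 := by
      nlinarith [neg_abs_le d, sq_abs d]
    have h5 : 1 ≤ d ^ 2 := by nlinarith [sq_abs d]
    have h6 : 0 ≤ p * (d ^ 2 + d) := mul_nonneg (by linarith) (by linarith)
    have h7 : 2 ≤ p * d ^ 2 := by nlinarith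
    linarith

lemma scalar_progress {p : ℝ} (hp : 2 ≤ p) (a d : ℝ) :
    |a| ^ p - |a - 16 * d| ^ p ≤
      16 * p * (|a| ^ (p - 2) * a * d - 2 * (|a| ^ (p - 2) * d ^ 2) - |d| ^ p) := by
  rcases eq_or_ne a 0 with rfl | ha
  · -- `|0|^(p-2)` is `1` when `p = 2` and `0` when `p > 2`, so the quadratic term only survives
    -- for `p = 2`.
    rcases eq_or_lt_of_le hp with rfl | hp'
    · have h2 : ∀ y : ℝ, |y| ^ (2 : ℝ) = y ^ 2 := fun y => by
        rw [Real.rpow_two, sq_abs]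
      simp only [h2, sub_self, Real.rpow_zero]
      nlinarith [sq_nonneg d]
    · have h1 : |0 - 16 * d| ^ p = 16 ^ p * |d| ^ p := by
        rw [zero_sub, abs_neg, abs_mul, abs_of_pos (by norm_num : (0 : ℝ) < 16),
          Real.mul_rpow (by norm_num) (abs_nonneg _)]
      have h2 : (8 : ℝ) ^ p ≤ 16 ^ p :=
        Real.rpow_le_rpow (by norm_num) (by norm_num) (by linarith)
      have h3 := thirty_two_mul_le_eight_rpow hp
      have h4 : 16 * p * |d| ^ p ≤ 16 ^ p * |d| ^ p :=
        mul_le_mul_of_nonneg_right (by linarith) (by positivity)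
      rw [h1, abs_zero, Real.zero_rpow (by linarith), Real.zero_rpow (by linarith)]
      linarith
  · obtain ⟨e, rfl⟩ : ∃ e, d = a * e := ⟨d / a, by field_simp⟩
    have hpos : 0 < |a| := abs_pos.mpr ha
    have h1 : |a - 16 * (a * e)| ^ p = |a| ^ p * |1 - 16 * e| ^ p := by
      rw [← Real.mul_rpow (abs_nonneg _) (abs_nonneg _), ← abs_mul]
      ring_nf
    have h2 : |a * e| ^ p = |a| ^ p * |e| ^ p := by
      rw [abs_mul, Real.mul_rpow (abs_nonneg _) (abs_nonneg _)]
    have h3 : |a| ^ (p - 2) * a ^ 2 = |a| ^ p := by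
      rw [← sq_abs a, ← Real.rpow_natCast, ← Real.rpow_add hpos]
      congr 1
      push_cast
      ring
    have h := mul_le_mul_of_nonneg_left (scalar_progress_one hp e)
      (Real.rpow_nonneg (abs_nonneg a) p)
    have h4 : |a| ^ (p - 2) * a * (a * e) = |a| ^ p * e := by rw [← h3]; ring
    have h5 : |a| ^ (p - 2) * (a * e) ^ 2 = |a| ^ p * e ^ 2 := by rw [← h3]; ring
    rw [h1, h2, h4, h5]
    linarith

/-- The residual certifies at least a `1/(16p)` fraction of the achievable
decrease: `f(x) − f(x − 16Δ) ≤ 16p·res_x(Δ)`. -/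
theorem residual_certifies_progress
    {m₁ m₂ n : ℕ} (p : ℝ) (hp : 2 ≤ p)
    (M : Matrix (Fin m₁) (Fin n) ℝ) (N : Matrix (Fin m₂) (Fin n) ℝ)
    (b : Fin n → ℝ)
    (f : (Fin n → ℝ) → ℝ)
    (hf : ∀ y : Fin n → ℝ,
      f y = b ⬝ᵥ y + ∑ i, ((M *ᵥ y) i) ^ 2 + ∑ i, |(N *ᵥ y) i| ^ p)
    (x Δ : Fin n → ℝ)
    (g : Fin n → ℝ)
    (hg : g = (1 / p) • b + (2 / p) • (Mᵀ *ᵥ (M *ᵥ x))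
        + Nᵀ *ᵥ (fun i => |(N *ᵥ x) i| ^ (p - 2) * (N *ᵥ x) i))
    (res : (Fin n → ℝ) → ℝ)
    (hres : ∀ Δ' : Fin n → ℝ,
      res Δ' = g ⬝ᵥ Δ'
        - ((2 / p ^ 2) * ((M *ᵥ Δ') ⬝ᵥ (M *ᵥ Δ'))
            + 2 * ∑ i, |(N *ᵥ x) i| ^ (p - 2) * ((N *ᵥ Δ') i) ^ 2)
        - ∑ i, |(N *ᵥ Δ') i| ^ p) :
    f x - f (x - (16 : ℝ) • Δ) ≤ 16 * p * res Δ := by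
  have hp0 : p ≠ 0 := by linarith
  have hgΔ : g ⬝ᵥ Δ = (1 / p) * (b ⬝ᵥ Δ) + (2 / p) * ((M *ᵥ x) ⬝ᵥ (M *ᵥ Δ))
      + ∑ i, |(N *ᵥ x) i| ^ (p - 2) * (N *ᵥ x) i * (N *ᵥ Δ) i := by
    rw [hg, add_dotProduct, add_dotProduct, smul_dotProduct, smul_dotProduct,
      mulVec_transpose, mulVec_transpose, ← dotProduct_mulVec, ← dotProduct_mulVec]
    simp only [smul_eq_mul, dotProduct]
  have hN : ∑ i, |(N *ᵥ x) i| ^ p - ∑ i, |(N *ᵥ x) i - 16 * (N *ᵥ Δ) i| ^ p ≤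
      16 * p * (∑ i, |(N *ᵥ x) i| ^ (p - 2) * (N *ᵥ x) i * (N *ᵥ Δ) i
        - 2 * ∑ i, |(N *ᵥ x) i| ^ (p - 2) * ((N *ᵥ Δ) i) ^ 2 - ∑ i, |(N *ᵥ Δ) i| ^ p) := by
    rw [Finset.mul_sum, ← Finset.sum_sub_distrib, ← Finset.sum_sub_distrib,
      ← Finset.sum_sub_distrib, Finset.mul_sum]
    exact Finset.sum_le_sum fun i _ => scalar_progress hp _ _
  have hM : ∑ i, ((M *ᵥ x) i - 16 * (M *ᵥ Δ) i) ^ 2 = ∑ i, ((M *ᵥ x) i) ^ 2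
      - 32 * ((M *ᵥ x) ⬝ᵥ (M *ᵥ Δ)) + 256 * ((M *ᵥ Δ) ⬝ᵥ (M *ᵥ Δ)) := by
    simp only [dotProduct, Finset.mul_sum]
    rw [← Finset.sum_sub_distrib, ← Finset.sum_add_distrib]
    exact Finset.sum_congr rfl fun i _ => by ring
  have hQ : 0 ≤ (M *ᵥ Δ) ⬝ᵥ (M *ᵥ Δ) :=
    Finset.sum_nonneg fun i _ => mul_self_nonneg _
  have hQ' : 32 / p * ((M *ᵥ Δ) ⬝ᵥ (M *ᵥ Δ)) ≤ 256 * ((M *ᵥ Δ) ⬝ᵥ (M *ᵥ Δ)) := by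
    refine mul_le_mul_of_nonneg_right ?_ hQ
    rw [div_le_iff₀ (by linarith)]
    linarith
  have hR : 16 * p * res Δ = 16 * (b ⬝ᵥ Δ) + 32 * ((M *ᵥ x) ⬝ᵥ (M *ᵥ Δ))
      - 32 / p * ((M *ᵥ Δ) ⬝ᵥ (M *ᵥ Δ))
      + 16 * p * (∑ i, |(N *ᵥ x) i| ^ (p - 2) * (N *ᵥ x) i * (N *ᵥ Δ) i
        - 2 * ∑ i, |(N *ᵥ x) i| ^ (p - 2) * ((N *ᵥ Δ) i) ^ 2 - ∑ i, |(N *ᵥ Δ) i| ^ p) := by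
    rw [hres, hgΔ]
    field_simp
    ring
  rw [hR, hf, hf]
  simp only [mulVec_sub, mulVec_smul, dotProduct_sub, dotProduct_smul, Pi.sub_apply,
    Pi.smul_apply, smul_eq_mul]
  rw [hM]
  linarith
end

section
/- Let p ≥ 2 be real, g ∈ ℝⁿ, R ∈ ℝ^{n×n} symmetric positive semidefinite, N ∈ ℝ^{m×n}, A ∈ ℝ^{d×n}, and define res(Δ) = gᵀΔ − ΔᵀRΔ − ‖NΔ‖_p^p. Let 0 < a ≤ b and ν > 0, and suppose Δ* maximizes res over {Δ : AΔ = 0} with a·ν < res(Δ*) ≤ b·ν. Then there exists Δ with AΔ = 0, gᵀΔ = a·ν, and ΔᵀRΔ + ‖NΔ‖_p^p ≤ b·ν. (The constrained decision problem obtained by fixing the linear term has optimum value at most bν.) -/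
/-!
The witness is the rescaled maximizer `t • Δstar` with `t = aν / L`, where `L = gᵀΔstar`.
Write `Q` and `P` for the quadratic and the `p`-th power term at `Δstar`. Since `Q, P ≥ 0`,
`L ≥ res Δstar > aν`, so `0 < t < 1`. As `p ≥ 2`, `t ^ p ≤ t ^ 2`, so comparing `Δstar` with
`t • Δstar` gives `t L - t² (Q + P) ≤ L - (Q + P)`, i.e. `(1 + t)(Q + P) ≤ L`. Therefore
`t² Q + t ^ p P ≤ t² (Q + P) ≤ t (Q + P) ≤ L - (Q + P) = res Δstar ≤ bν`.
Using the same `t` for the comparison and for the witness makes the first-order condition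
`L = 2Q + pP` unnecessary.
-/

open Matrix

/-- The constrained decision problem obtained by fixing the linear term has
optimum value at most `bν`. -/
theorem decision_problem_feasibility
    {n m d : ℕ} (p : ℝ) (hp : 2 ≤ p)
    (g : Fin n → ℝ) (R : Matrix (Fin n) (Fin n) ℝ) (hR : R.PosSemidef)
    (N : Matrix (Fin m) (Fin n) ℝ) (A : Matrix (Fin d) (Fin n) ℝ)
    (a b ν : ℝ) (ha : 0 < a) (hab : a ≤ b) (hν : 0 < ν)
    (res : (Fin n → ℝ) → ℝ)
    (hres : ∀ Δ : Fin n → ℝ,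
      res Δ = g ⬝ᵥ Δ - Δ ⬝ᵥ (R *ᵥ Δ) - ∑ i, |(N *ᵥ Δ) i| ^ p)
    (Δstar : Fin n → ℝ) (hfeas : A *ᵥ Δstar = 0)
    (hmax : ∀ Δ : Fin n → ℝ, A *ᵥ Δ = 0 → res Δ ≤ res Δstar)
    (hlow : a * ν < res Δstar) (hhigh : res Δstar ≤ b * ν) :
    ∃ Δ : Fin n → ℝ, A *ᵥ Δ = 0 ∧ g ⬝ᵥ Δ = a * ν ∧
      Δ ⬝ᵥ (R *ᵥ Δ) + ∑ i, |(N *ᵥ Δ) i| ^ p ≤ b * ν := by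
  have hQ : 0 ≤ Δstar ⬝ᵥ (R *ᵥ Δstar) := by
    simpa using hR.dotProduct_mulVec_nonneg Δstar
  have hP : 0 ≤ ∑ i, |(N *ᵥ Δstar) i| ^ p :=
    Finset.sum_nonneg fun i _ => Real.rpow_nonneg (abs_nonneg _) p
  have hstar := hres Δstar
  have haν : 0 < a * ν := mul_pos ha hν
  have hscale : ∀ t : ℝ, 0 < t → ∑ i, |(N *ᵥ (t • Δstar)) i| ^ p
      = t ^ p * ∑ i, |(N *ᵥ Δstar) i| ^ p := by
    intro t ht
    rw [Finset.mul_sum]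
    refine Finset.sum_congr rfl fun i _ => ?_
    rw [mulVec_smul, Pi.smul_apply, smul_eq_mul, abs_mul, abs_of_pos ht,
      Real.mul_rpow ht.le (abs_nonneg _)]
  have hquad : ∀ t : ℝ, (t • Δstar) ⬝ᵥ (R *ᵥ (t • Δstar))
      = t ^ 2 * (Δstar ⬝ᵥ (R *ᵥ Δstar)) := by
    intro t
    rw [mulVec_smul, smul_dotProduct, dotProduct_smul, smul_eq_mul, smul_eq_mul]
    ring
  have hlin : ∀ t : ℝ, g ⬝ᵥ (t • Δstar) = t * (g ⬝ᵥ Δstar) := by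
    intro t
    rw [dotProduct_smul, smul_eq_mul]
  generalize hLdef : g ⬝ᵥ Δstar = L at *
  generalize Δstar ⬝ᵥ (R *ᵥ Δstar) = Q at *
  generalize ∑ i, |(N *ᵥ Δstar) i| ^ p = P at *
  have hLpos : 0 < L := by linarith
  obtain ⟨t, ht⟩ : ∃ t, t = a * ν / L := ⟨_, rfl⟩
  have ht0 : 0 < t := ht ▸ div_pos haν hLpos
  have ht1 : t < 1 := by
    rw [ht, div_lt_one hLpos]
    linarith
  have htL : t * L = a * ν := by
    rw [ht, div_mul_cancel₀ _ hLpos.ne']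
  have hker : A *ᵥ (t • Δstar) = 0 := by rw [mulVec_smul, hfeas, smul_zero]
  have hpow : t ^ p ≤ t ^ 2 := by
    rw [← Real.rpow_two]
    exact Real.rpow_le_rpow_of_exponent_ge ht0 ht1.le hp
  have htP : t ^ p * P ≤ t ^ 2 * P := mul_le_mul_of_nonneg_right hpow hP
  have hopt := hmax _ hker
  rw [hres, hlin, hquad, hscale t ht0] at hopt
  refine ⟨t • Δstar, hker, by rw [hlin, htL], ?_⟩
  rw [hquad, hscale t ht0]
  -- Optimality gives `(1 - t²)(Q + P) ≤ (1 - t) L`; the factor `1 - t > 0` cancels.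
  have hkey : (1 + t) * (Q + P) ≤ L := by
    have h : (1 - t) * ((1 + t) * (Q + P)) ≤ (1 - t) * L := by linarith
    exact le_of_mul_le_mul_left h (by linarith)
  have htt : t ^ 2 * (Q + P) ≤ t * (Q + P) :=
    mul_le_mul_of_nonneg_right (by nlinarith) (by linarith)
  linarith
end

section
/- Let p ≥ 2 be real, g ∈ ℝⁿ, R ∈ ℝ^{n×n} symmetric positive semidefinite, N ∈ ℝ^{m×n}, A ∈ ℝ^{d×n}, and res(Δ) = gᵀΔ − ΔᵀRΔ − ‖NΔ‖_p^p. Let 0 < a ≤ b, ν > 0, α ≥ 1, β ≥ 1, and suppose Δ̃ satisfies AΔ̃ = 0, gᵀΔ̃ = a·ν, Δ̃ᵀRΔ̃ ≤ α·b·ν and ‖NΔ̃‖_p^p ≤ β·b·ν. Then with μ = a/(4·b·α·β^{1/(p−1)}), the scaled vector μΔ̃ satisfies AμΔ̃ = 0 and res(μΔ̃) ≥ a²ν/(16·b·α·β^{1/(p−1)}). (An (α,β)-approximate solution of the decision problem, suitably scaled, approximately solves the residual problem.) -/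
/-!
Write `B = β ^ (1 / (p - 1))` and `μ = a / (4 b α B)`. By homogeneity,
`res (μ Δ) = μ gᵀΔ - μ² ΔᵀRΔ - μ ^ p ‖NΔ‖_p^p`. The linear term equals `μ a ν`. The quadratic term
is at most `μ² α b ν = μ a ν / (4 B) ≤ μ a ν / 4`, since `B ≥ 1`. The exponent in `B` is chosen so
that `β μ ^ (p - 1) = (a / (4 b α)) ^ (p - 1)`; since the base is at most one and `p - 1 ≥ 1`, this
is at most `a / (4 b)`, so the `p`-th power term is at most `μ a ν / 4` as well. What remains is
at least `μ a ν / 2`, twice the required bound.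
-/

open Matrix

/-- The scaling step satisfies `β μ ^ (p - 1) ≤ t` for `μ = t / β ^ (1 / (p - 1))`. -/
lemma mul_div_rpow_le {p β t : ℝ} (hp : 2 ≤ p) (hβ : 1 ≤ β) (ht0 : 0 < t) (ht1 : t ≤ 1) :
    β * (t / β ^ (1 / (p - 1))) ^ (p - 1) ≤ t := by
  have hβ0 : 0 < β := by linarith
  have hB : (β ^ (1 / (p - 1))) ^ (p - 1) = β := by
    rw [← Real.rpow_mul hβ0.le, one_div_mul_cancel (by linarith), Real.rpow_one]
  rw [Real.div_rpow ht0.le (Real.rpow_nonneg hβ0.le _), hB, mul_div_cancel₀ _ hβ0.ne']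
  simpa using Real.rpow_le_rpow_of_exponent_ge ht0 ht1 (show (1 : ℝ) ≤ p - 1 by linarith)

/-- An (α,β)-approximate solution of the decision problem, suitably scaled,
approximately solves the residual problem. -/
theorem decision_solution_scales_to_residual
    {n m d : ℕ} (p : ℝ) (hp : 2 ≤ p)
    (g : Fin n → ℝ) (R : Matrix (Fin n) (Fin n) ℝ) (hR : R.PosSemidef)
    (N : Matrix (Fin m) (Fin n) ℝ) (A : Matrix (Fin d) (Fin n) ℝ)
    (a b ν α β : ℝ) (ha : 0 < a) (hab : a ≤ b) (hν : 0 < ν)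
    (hα : 1 ≤ α) (hβ : 1 ≤ β)
    (res : (Fin n → ℝ) → ℝ)
    (hres : ∀ Δ : Fin n → ℝ,
      res Δ = g ⬝ᵥ Δ - Δ ⬝ᵥ (R *ᵥ Δ) - ∑ i, |(N *ᵥ Δ) i| ^ p)
    (Δt : Fin n → ℝ) (ht1 : A *ᵥ Δt = 0) (ht2 : g ⬝ᵥ Δt = a * ν)
    (ht3 : Δt ⬝ᵥ (R *ᵥ Δt) ≤ α * b * ν)
    (ht4 : ∑ i, |(N *ᵥ Δt) i| ^ p ≤ β * b * ν) :
    A *ᵥ ((a / (4 * b * α * β ^ (1 / (p - 1)))) • Δt) = 0 ∧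
    res ((a / (4 * b * α * β ^ (1 / (p - 1)))) • Δt)
      ≥ a ^ 2 * ν / (16 * b * α * β ^ (1 / (p - 1))) := by
  have hb : 0 < b := by linarith
  have hα0 : 0 < α := by linarith
  have hB1 : 1 ≤ β ^ (1 / (p - 1)) :=
    Real.one_le_rpow hβ (one_div_nonneg.mpr (by linarith))
  have hkey := mul_div_rpow_le (p := p) (β := β) (t := a / (4 * b * α)) hp hβ (by positivity)
    (by rw [div_le_one (by positivity)]; nlinarith [mul_le_mul hab hα zero_le_one hb.le])
  rw [div_div] at hkey
  generalize β ^ (1 / (p - 1)) = B at *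
  have hB0 : 0 < B := by linarith
  have hμ0 : 0 < a / (4 * b * α * B) := by positivity
  have hμ : a / (4 * b * α * B) * (4 * b * α * B) = a := div_mul_cancel₀ _ (by positivity)
  have htarget : a ^ 2 * ν / (16 * b * α * B) = a / (4 * b * α * B) * (a * ν) / 4 := by
    field_simp
    norm_num
  rw [htarget]
  generalize a / (4 * b * α * B) = μ at *
  refine ⟨by rw [Matrix.mulVec_smul, ht1, smul_zero], ?_⟩
  have hsum : ∑ i, |(N *ᵥ (μ • Δt)) i| ^ p = μ ^ p * ∑ i, |(N *ᵥ Δt) i| ^ p := by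
    rw [Finset.mul_sum]
    refine Finset.sum_congr rfl fun i _ => ?_
    rw [Matrix.mulVec_smul, Pi.smul_apply, smul_eq_mul, abs_mul, abs_of_pos hμ0,
      Real.mul_rpow hμ0.le (abs_nonneg _)]
  rw [hres, hsum, Matrix.mulVec_smul, dotProduct_smul, dotProduct_smul, smul_dotProduct, ht2]
  simp only [smul_eq_mul]
  have hquad : μ * (μ * (Δt ⬝ᵥ (R *ᵥ Δt))) ≤ μ * (a * ν / 4) := by
    refine mul_le_mul_of_nonneg_left ?_ hμ0.le
    have hBμ : μ * (b * α) ≤ a / 4 := by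
      nlinarith [mul_le_mul_of_nonneg_left hB1 (show 0 ≤ μ * (b * α) by positivity)]
    calc μ * (Δt ⬝ᵥ (R *ᵥ Δt)) ≤ μ * (α * b * ν) := mul_le_mul_of_nonneg_left ht3 hμ0.le
      _ = μ * (b * α) * ν := by ring
      _ ≤ a / 4 * ν := mul_le_mul_of_nonneg_right hBμ hν.le
      _ = a * ν / 4 := by ring
  have hpow : μ ^ p * ∑ i, |(N *ᵥ Δt) i| ^ p ≤ μ * (a * ν / 4) := by
    have hsplit : μ ^ p = μ * μ ^ (p - 1) := by
      rw [Real.rpow_sub_one hμ0.ne', mul_div_cancel₀ _ hμ0.ne']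
    have ht : a / (4 * b * α) ≤ a / (4 * b) :=
      div_le_div_of_nonneg_left ha.le (by positivity) (le_mul_of_one_le_right (by positivity) hα)
    calc μ ^ p * ∑ i, |(N *ᵥ Δt) i| ^ p ≤ μ ^ p * (β * b * ν) :=
          mul_le_mul_of_nonneg_left ht4 (Real.rpow_nonneg hμ0.le _)
      _ = μ * ((β * μ ^ (p - 1)) * (b * ν)) := by rw [hsplit]; ring
      _ ≤ μ * (a / (4 * b) * (b * ν)) := by
          have := hkey.trans ht
          gcongr
      _ = μ * (a * ν / 4) := by field_simp
  have hpos : 0 < μ * (a * ν) := by positivity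
  linarith
end

section
/- Let p ≥ 2 be real, let B ∈ ℝ^{E×V} be a matrix (the edge-vertex incidence matrix of a graph), g ∈ ℝ^E, d ∈ ℝ^V, and let r, s ∈ ℝ^E be entrywise nonnegative. Suppose the feasible set {f : Bᵀf = d} is nonempty. Then sup over {f : Bᵀf = d} of gᵀf − Σ_e (r_e f_e² + s_e|f_e|^p) is +∞ if and only if there exists z ∈ ℝ^E with Bᵀz = 0, with r_e·z_e = 0 and s_e·z_e = 0 for every e, and gᵀz ≠ 0. (The smoothed p-norm flow problem is unbounded exactly when the gradient has nonzero inner product with some element of ker(Bᵀ) ∩ ker(diag r) ∩ ker(diag s).) -/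
/-!
Write `K = ker Bᵀ ∩ ker (diag r) ∩ ker (diag s)`. Moving a feasible flow along `z ∈ K` leaves the
penalty `∑ (r f² + s |f|^p)` unchanged and changes the linear term at rate `g ⬝ᵥ z`; so if
`g ⬝ᵥ z ≠ 0` for some `z ∈ K`, the objective takes arbitrarily large values.

Conversely, suppose `g` vanishes on `K`. Since `r, s ≥ 0`, `K` is the kernel of
`f ↦ (Bᵀ f, (r + s) f)`, so `f ↦ g ⬝ᵥ f` factors through this map (`exists_dual_certificate`): on the
feasible set, `g ⬝ᵥ f = C + ∑ (r + s) c f` for some constants `C` and `c`. The objective is then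
`C` plus a sum of one-variable terms `(r + s) c f - r f² - s |f|^p`, each of which is bounded above
by completing the square (`edge_term_le`).
-/

open Matrix

/-- The bound uses `x² ≤ |x|^p + 1`, valid for `p ≥ 2`. -/
lemma edge_term_le {p : ℝ} (hp : 2 ≤ p) {r s : ℝ} (hr : 0 ≤ r) (hs : 0 ≤ s) (c x : ℝ) :
    (r + s) * x * c - (r * x ^ 2 + s * |x| ^ p) ≤ (r + s) * (c ^ 2 + 1) := by
  have hsq : x ^ 2 ≤ |x| ^ p + 1 := by
    rcases le_total 1 |x| with h | h
    · have h2 := Real.rpow_le_rpow_of_exponent_le h hp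
      rw [Real.rpow_two, sq_abs] at h2
      linarith
    · have h0 : 0 ≤ |x| ^ p := Real.rpow_nonneg (abs_nonneg x) p
      have h1 : x ^ 2 ≤ 1 := (sq_le_one_iff_abs_le_one x).2 h
      linarith
  have hc : x * c ≤ c ^ 2 + x ^ 2 := by nlinarith [sq_nonneg (c - x), sq_nonneg (c + x)]
  nlinarith [mul_le_mul_of_nonneg_left hsq hs, mul_le_mul_of_nonneg_left hc hr,
    mul_le_mul_of_nonneg_left hc hs]

/-- A functional vanishing on `ker Bᵀ ∩ ker (diag w)` is a combination of the coordinates of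
`Bᵀ f` and of `w f`. -/
lemma exists_dual_certificate {E V : Type*} [Fintype E] [Fintype V]
    (B : Matrix E V ℝ) (g w : E → ℝ)
    (h : ∀ z : E → ℝ, Bᵀ *ᵥ z = 0 → (∀ e, w e * z e = 0) → g ⬝ᵥ z = 0) :
    ∃ (y : (V → ℝ) →ₗ[ℝ] ℝ) (c : E → ℝ),
      ∀ f : E → ℝ, g ⬝ᵥ f = y (Bᵀ *ᵥ f) + ∑ e, w e * f e * c e := by
  classical
  let D : (E → ℝ) →ₗ[ℝ] (E → ℝ) := LinearMap.pi fun e => w e • LinearMap.proj e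
  let T : (E → ℝ) →ₗ[ℝ] (V → ℝ) × (E → ℝ) := (Matrix.mulVecLin Bᵀ).prod D
  let G : Module.Dual ℝ (E → ℝ) := dotProductBilin ℝ ℝ g
  have hG : G ∈ LinearMap.range T.dualMap := by
    rw [LinearMap.range_dualMap_eq_dualAnnihilator_ker, Submodule.mem_dualAnnihilator]
    intro z hz
    have hz' : (Bᵀ *ᵥ z, D z) = 0 := hz
    rw [Prod.mk_eq_zero] at hz'
    exact h z hz'.1 fun e => congrFun hz'.2 e
  obtain ⟨L, hL⟩ := hG
  refine ⟨L ∘ₗ LinearMap.inl ℝ _ _,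
    fun e => (L ∘ₗ LinearMap.inr ℝ (V → ℝ) (E → ℝ)) fun j => if e = j then 1 else 0,
    fun f => ?_⟩
  have h1 : g ⬝ᵥ f = L (Bᵀ *ᵥ f, D f) := (LinearMap.congr_fun hL f).symm
  have h2 := LinearMap.pi_apply_eq_sum_univ (L ∘ₗ LinearMap.inr ℝ (V → ℝ) (E → ℝ)) (D f)
  have h3 : (Bᵀ *ᵥ f, D f) = LinearMap.inl ℝ (V → ℝ) (E → ℝ) (Bᵀ *ᵥ f)
      + LinearMap.inr ℝ (V → ℝ) (E → ℝ) (D f) := by simp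
  rw [h1, h3, map_add]
  congr 1

/-- The smoothed p-norm flow problem is unbounded exactly when the gradient has
nonzero inner product with some element of
`ker(Bᵀ) ∩ ker(diag r) ∩ ker(diag s)`. -/
theorem smoothed_pnorm_flow_unbounded_iff
    {E V : Type*} [Fintype E] [Fintype V] (p : ℝ) (hp : 2 ≤ p)
    (B : Matrix E V ℝ) (g : E → ℝ) (d : V → ℝ) (r s : E → ℝ)
    (hr : ∀ e, 0 ≤ r e) (hs : ∀ e, 0 ≤ s e)
    (hfeas : ∃ f : E → ℝ, Bᵀ *ᵥ f = d) :
    ¬ BddAbove ((fun f : E → ℝ =>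
        g ⬝ᵥ f - ∑ e, (r e * f e ^ 2 + s e * |f e| ^ p)) ''
        {f : E → ℝ | Bᵀ *ᵥ f = d})
      ↔ ∃ z : E → ℝ, Bᵀ *ᵥ z = 0 ∧ (∀ e, r e * z e = 0 ∧ s e * z e = 0) ∧
          g ⬝ᵥ z ≠ 0 := by
  constructor
  · contrapose!
    intro h
    obtain ⟨y, c, hyc⟩ := exists_dual_certificate B g (fun e => r e + s e) (by
      intro z hz hw
      refine h z hz fun e => ?_
      rcases mul_eq_zero.1 (hw e) with h0 | h0
      · have h1 : r e = 0 := by linarith [hr e, hs e]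
        have h2 : s e = 0 := by linarith [hr e, hs e]
        simp [h1, h2]
      · simp [h0])
    refine ⟨y d + ∑ e, (r e + s e) * (c e ^ 2 + 1), ?_⟩
    rintro _ ⟨f, hf, rfl⟩
    have hf' : Bᵀ *ᵥ f = d := hf
    have hsum := Finset.sum_le_sum fun e (_ : e ∈ Finset.univ) =>
      edge_term_le hp (hr e) (hs e) (c e) (f e)
    rw [Finset.sum_sub_distrib] at hsum
    have hg := hyc f
    rw [hf'] at hg
    simp only
    linarith
  · rintro ⟨z, hz, hrs, hgz⟩ ⟨M, hM⟩
    obtain ⟨f, hf⟩ := hfeas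
    -- The step `t` along `z` is chosen to bring the objective exactly to `M + 1`.
    set P := ∑ e, (r e * f e ^ 2 + s e * |f e| ^ p) with hP
    set t := (M + 1 - (g ⬝ᵥ f - P)) / (g ⬝ᵥ z) with ht
    have hmem := hM ⟨f + t • z, by simp [mulVec_add, mulVec_smul, hf, hz], rfl⟩
    have hpen : ∑ e, (r e * (f + t • z) e ^ 2 + s e * |(f + t • z) e| ^ p) = P := by
      refine Finset.sum_congr rfl fun e _ => ?_
      by_cases h0 : z e = 0
      · simp [h0]
      · have h1 : r e = 0 := (mul_eq_zero.1 (hrs e).1).resolve_right h0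
        have h2 : s e = 0 := (mul_eq_zero.1 (hrs e).2).resolve_right h0
        simp [h1, h2]
    have htz : t * (g ⬝ᵥ z) = M + 1 - (g ⬝ᵥ f - P) := div_mul_cancel₀ _ hgz
    simp only [hpen, dotProduct_add, dotProduct_smul, smul_eq_mul] at hmem
    linarith
end
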